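/- Let K be a field of characteristic 0, let A be a Cohen-Macaulay standard graded K-algebra of Krull dimension d, let r ≥ 1 be an integer, and set s = ⌊(r−1)d/r⌋. Write h_{A^⟨r⟩}(t) = Σ_{i≥0} h_i^⟨r⟩ t^i for the h-polynomial of the r-th Veronese subalgebra A^⟨r⟩. Then h_i^⟨r⟩ ≤ h_{s−i}^⟨r⟩ for all i ≤ s/2. -/

import Mathlib

/-!
Over an infinite field, a Cohen-Macaulay standard graded algebra `A` of dimension `d` has a regular
sequence of `d` linear forms, and the quotient by it has Hilbert series `h_A = Hilb(A) (1 - t) ^ d`.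
So `h_A` has nonnegative coefficients. The `h`-polynomial of the `r`-th Veronese subalgebra consists
of the coefficients of `h_A (1 + t + ⋯ + t ^ (r - 1)) ^ d` at multiples of `r`. The power is
symmetric and unimodal with centre `(r - 1) d / 2`, hence its coefficients satisfy `c a ≤ c b`
whenever `a ≤ b` and `a + b ≤ (r - 1) d`. This property survives multiplication by `h_A`, and
picking every `r`-th coefficient turns the bound `(r - 1) d` into `⌊(r - 1) d / r⌋`.
-/

section TopHeavy

open PowerSeries Finset

/-- A power series with nonnegative coefficients is *top-heavy up to `m`* if, of two coefficients
whose indices add up to at most `m`, the one of larger index is the larger one. The condition on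
all sums `a + b ≤ m`, not only on `a + b = m`, is what makes the notion stable under products. -/
structure IsTopHeavy {R : Type*} [Semiring R] [PartialOrder R] (m : ℕ) (f : R⟦X⟧) : Prop where
  nonneg : ∀ n, 0 ≤ coeff n f
  coeff_le : ∀ ⦃a b⦄, a ≤ b → a + b ≤ m → coeff a f ≤ coeff b f

/-- The power series `∑ i, c (i * r) t ^ i` obtained from `∑ i, c i t ^ i`; it sends the Hilbert
series of a graded algebra to that of its `r`-th Veronese subalgebra. -/
noncomputable def veroneseSeries {R : Type*} [Semiring R] (r : ℕ) (f : R⟦X⟧) : R⟦X⟧ :=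
  mk fun i => coeff (i * r) f

theorem coeff_mul_geom_sum {R : Type*} [Semiring R] (f : R⟦X⟧) (r n : ℕ) :
    coeff n (f * ∑ k ∈ range r, X ^ k) = ∑ j ∈ Ico (n + 1 - r) (n + 1), coeff j f := by
  simp only [mul_sum, map_sum, coeff_mul_X_pow', ← sum_filter]
  refine sum_nbij' (n - ·) (n - ·) ?_ ?_ ?_ ?_ ?_ <;> simp <;> omega

namespace IsTopHeavy

variable {R : Type*} [Semiring R] [PartialOrder R] {m : ℕ} {f g : R⟦X⟧}

theorem veronese (hf : IsTopHeavy m f) (r : ℕ) :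
    IsTopHeavy (m / r) (veroneseSeries r f) where
  nonneg n := by simpa only [veroneseSeries, coeff_mk] using hf.nonneg (n * r)
  coeff_le a b hab hsum := by
    simp only [veroneseSeries, coeff_mk]
    refine hf.coeff_le (Nat.mul_le_mul_right r hab) ?_
    calc a * r + b * r = (a + b) * r := (add_mul a b r).symm
      _ ≤ m / r * r := Nat.mul_le_mul_right r hsum
      _ ≤ m := Nat.div_mul_le_self m r

variable [IsOrderedRing R]

theorem one : IsTopHeavy 0 (1 : R⟦X⟧) where
  nonneg n := by rw [coeff_one]; split_ifs <;> simp
  coeff_le a b _ hsum := by rw [show a = b by omega]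

theorem mul_left (hf : IsTopHeavy m f) (hg : ∀ n, 0 ≤ coeff n g) : IsTopHeavy m (g * f) where
  nonneg n := by
    rw [coeff_mul]
    exact sum_nonneg fun p _ => mul_nonneg (hg _) (hf.nonneg _)
  coeff_le a b hab hsum := by
    rw [coeff_mul, coeff_mul,
      Nat.sum_antidiagonal_eq_sum_range_succ (fun i j => coeff i g * coeff j f),
      Nat.sum_antidiagonal_eq_sum_range_succ (fun i j => coeff i g * coeff j f)]
    calc ∑ k ∈ range (a + 1), coeff k g * coeff (a - k) f
        ≤ ∑ k ∈ range (a + 1), coeff k g * coeff (b - k) f :=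
          sum_le_sum fun k _ =>
            mul_le_mul_of_nonneg_left (hf.coeff_le (by omega) (by omega)) (hg k)
      _ ≤ ∑ k ∈ range (b + 1), coeff k g * coeff (b - k) f :=
          sum_le_sum_of_subset_of_nonneg (range_mono (by omega))
            fun k _ _ => mul_nonneg (hg k) (hf.nonneg _)

theorem sum_Ico_le_sum_Ico (hf : IsTopHeavy m f) {r a b : ℕ} (hab : a ≤ b)
    (hsum : a + b ≤ m + (r - 1)) :
    ∑ j ∈ Ico (a + 1 - r) (a + 1), coeff j f ≤ ∑ j ∈ Ico (b + 1 - r) (b + 1), coeff j f := by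
  -- The reflection `j ↦ a + b + 1 - r - j` maps the part of the lower window outside the upper
  -- one into the part of the upper window outside the lower one.
  set s := Ico (a + 1 - r) (a + 1)
  set t := Ico (b + 1 - r) (b + 1)
  have reflect_mapsTo : (s \ t).image (a + b + 1 - r - ·) ⊆ t \ s := by
    grind
  have reflect_injOn : Set.InjOn (a + b + 1 - r - ·) (s \ t : Finset ℕ) := by
    intro j hj k hk
    grind
  have le_reflect : ∀ j ∈ s \ t, coeff j f ≤ coeff (a + b + 1 - r - j) f :=
    fun j hj => hf.coeff_le (by grind) (by grind)
  have sdiff_le : ∑ j ∈ s \ t, coeff j f ≤ ∑ j ∈ t \ s, coeff j f :=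
    calc ∑ j ∈ s \ t, coeff j f
        ≤ ∑ j ∈ s \ t, coeff (a + b + 1 - r - j) f := sum_le_sum le_reflect
      _ = ∑ j ∈ (s \ t).image (a + b + 1 - r - ·), coeff j f :=
          (sum_image (f := fun j => coeff j f) reflect_injOn).symm
      _ ≤ ∑ j ∈ t \ s, coeff j f :=
          sum_le_sum_of_subset_of_nonneg reflect_mapsTo fun j _ _ => hf.nonneg j
  rw [← sum_inter_add_sum_sdiff s t, ← sum_inter_add_sum_sdiff t s, inter_comm t s]
  gcongr

theorem mul_geom_sum (hf : IsTopHeavy m f) (r : ℕ) :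
    IsTopHeavy (m + (r - 1)) (f * ∑ k ∈ range r, X ^ k) where
  nonneg n := by
    rw [coeff_mul_geom_sum]
    exact sum_nonneg fun j _ => hf.nonneg j
  coeff_le a b hab hsum := by
    simpa only [coeff_mul_geom_sum] using hf.sum_Ico_le_sum_Ico hab hsum

theorem geom_sum_pow (r d : ℕ) :
    IsTopHeavy ((r - 1) * d) ((∑ k ∈ range r, X ^ k : R⟦X⟧) ^ d) := by
  induction d with
  | zero => simpa using one
  | succ d ih => simpa only [pow_succ, Nat.mul_succ] using ih.mul_geom_sum r

end IsTopHeavy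

variable {R : Type*} [CommRing R] {r : ℕ}

theorem veroneseSeries_mul_one_sub_X_pow (hr : 0 < r) (f : R⟦X⟧) :
    veroneseSeries r (f * (1 - X ^ r)) = veroneseSeries r f * (1 - X) := by
  ext i
  rw [mul_one_sub, mul_one_sub]
  simp only [veroneseSeries, coeff_mk, map_sub, coeff_mul_X_pow']
  cases i with
  | zero => simp [hr.ne']
  | succ i => rw [coeff_succ_mul_X, coeff_mk, if_pos (by nlinarith), Nat.succ_mul,
      Nat.add_sub_cancel]

theorem veroneseSeries_mul_one_sub_X_pow_pow (hr : 0 < r) (f : R⟦X⟧) (d : ℕ) :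
    veroneseSeries r (f * (1 - X ^ r) ^ d) = veroneseSeries r f * (1 - X) ^ d := by
  induction d with
  | zero => simp
  | succ d ih =>
    rw [pow_succ, ← mul_assoc, veroneseSeries_mul_one_sub_X_pow hr, ih, pow_succ, mul_assoc]

theorem isTopHeavy_veroneseSeries_mul_one_sub_X_pow [PartialOrder R] [IsOrderedRing R]
    (hr : 0 < r) {d : ℕ} {H : R⟦X⟧} (hH : ∀ n, 0 ≤ coeff n (H * (1 - X) ^ d)) :
    IsTopHeavy ((r - 1) * d / r) (veroneseSeries r H * (1 - X) ^ d) := by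
  have factor : H * (1 - X ^ r) ^ d = H * (1 - X) ^ d * (∑ k ∈ range r, X ^ k) ^ d := by
    rw [mul_assoc, ← mul_pow, mul_neg_geom_sum]
  rw [← veroneseSeries_mul_one_sub_X_pow_pow hr, factor]
  exact ((IsTopHeavy.geom_sum_pow r d).mul_left hH).veronese r

end TopHeavy

section HilbertSeries

open PowerSeries

/-- The Hilbert series `∑ n, dim_K (ℳ n) t ^ n` of a family of modules, with integer coefficients so
that it can be multiplied by `1 - t`. A component of infinite dimension contributes `0`. -/
noncomputable def hilbertSeries {K M : Type*} [Semiring K] [AddCommMonoid M] [Module K M]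
    (ℳ : ℕ → Submodule K M) : ℤ⟦X⟧ :=
  mk fun n => (Module.finrank K (ℳ n) : ℤ)

/-- The grading that `A ⧸ I` inherits from `A` when `I` is homogeneous. The components are images of
those of `A`, so that no graded ring structure on the quotient has to be constructed. -/
def quotientGrading {K A : Type*} [CommRing K] [CommRing A] [Algebra K A]
    (𝒜 : ℕ → Submodule K A) (I : Ideal A) (n : ℕ) : Submodule K (A ⧸ I) :=
  (𝒜 n).map (Ideal.Quotient.mkₐ K I).toLinearMap

theorem veroneseSeries_hilbertSeries {K M : Type*} [Semiring K] [AddCommMonoid M] [Module K M]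
    (ℳ : ℕ → Submodule K M) (r : ℕ) :
    veroneseSeries r (hilbertSeries ℳ) = hilbertSeries fun i => ℳ (i * r) := by
  simp only [veroneseSeries, hilbertSeries, coeff_mk]

section CommRing

variable {K A : Type*} [CommRing K] [CommRing A] [Algebra K A] {𝒜 : ℕ → Submodule K A}

theorem hilbertSeries_quotientGrading_bot :
    hilbertSeries (quotientGrading 𝒜 ⊥) = hilbertSeries 𝒜 := by
  have mk_injective : Function.Injective (Ideal.Quotient.mkₐ K (⊥ : Ideal A)).toLinearMap :=
    (RingHom.injective_iff_ker_eq_bot (Ideal.Quotient.mk (⊥ : Ideal A))).2 Ideal.mk_ker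
  ext n
  simp only [hilbertSeries, coeff_mk]
  exact congrArg _ (LinearEquiv.finrank_eq (Submodule.equivMapOfInjective _ mk_injective _)).symm

variable [GradedAlgebra 𝒜] {I : Ideal A} {x : A} {k : ℕ}

theorem exists_sub_mul_mem_of_mem_sup_span_singleton (hI : I.IsHomogeneous 𝒜) (hx : x ∈ 𝒜 k)
    {n : ℕ} {a : A} (ha : a ∈ 𝒜 (k + n)) (h : a ∈ I ⊔ Ideal.span {x}) :
    ∃ c ∈ 𝒜 n, a - x * c ∈ I := by
  obtain ⟨y, hy, _, hz, rfl⟩ := Submodule.mem_sup.1 h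
  obtain ⟨c, rfl⟩ := Ideal.mem_span_singleton.1 hz
  refine ⟨DirectSum.decompose 𝒜 c n, SetLike.coe_mem _, ?_⟩
  have component := DirectSum.decompose_of_mem_same 𝒜 ha
  rw [DirectSum.decompose_add, DirectSum.add_apply, Submodule.coe_add,
    DirectSum.coe_decompose_mul_add_of_left_mem 𝒜 hx] at component
  rw [← component, add_sub_cancel_right]
  exact hI _ hy

theorem mem_of_mem_sup_span_singleton_of_lt (hI : I.IsHomogeneous 𝒜) (hx : x ∈ 𝒜 k) {n : ℕ}
    (hn : n < k) {a : A} (ha : a ∈ 𝒜 n) (h : a ∈ I ⊔ Ideal.span {x}) : a ∈ I := by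
  obtain ⟨y, hy, _, hz, rfl⟩ := Submodule.mem_sup.1 h
  obtain ⟨c, rfl⟩ := Ideal.mem_span_singleton.1 hz
  have component := DirectSum.decompose_of_mem_same 𝒜 ha
  rw [DirectSum.decompose_add, DirectSum.add_apply, Submodule.coe_add,
    DirectSum.coe_decompose_mul_of_left_mem_of_not_le 𝒜 hx hn.not_ge, add_zero] at component
  rw [← component]
  exact hI _ hy

theorem quotientGrading_inf_ker_eq_bot_of_lt (hI : I.IsHomogeneous 𝒜) (hx : x ∈ 𝒜 k) {n : ℕ}
    (hn : n < k) :
    quotientGrading 𝒜 I n ⊓ LinearMap.ker (Ideal.Quotient.factorₐ K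
      (le_sup_left : I ≤ I ⊔ Ideal.span {x})).toLinearMap = ⊥ := by
  rw [eq_bot_iff]
  rintro _ ⟨⟨a, ha, rfl⟩, hker⟩
  exact Ideal.Quotient.eq_zero_iff_mem.2
    (mem_of_mem_sup_span_singleton_of_lt hI hx hn ha (Ideal.Quotient.eq_zero_iff_mem.1 hker))

theorem quotientGrading_inf_ker_eq_map_mulLeft (hI : I.IsHomogeneous 𝒜) (hx : x ∈ 𝒜 k) (n : ℕ) :
    quotientGrading 𝒜 I (k + n) ⊓ LinearMap.ker (Ideal.Quotient.factorₐ K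
      (le_sup_left : I ≤ I ⊔ Ideal.span {x})).toLinearMap =
      (quotientGrading 𝒜 I n).map (LinearMap.mulLeft K (Ideal.Quotient.mk I x)) := by
  apply le_antisymm
  · rintro _ ⟨⟨a, ha, rfl⟩, hker⟩
    obtain ⟨c, hc, hac⟩ := exists_sub_mul_mem_of_mem_sup_span_singleton hI hx ha
      (Ideal.Quotient.eq_zero_iff_mem.1 hker)
    exact ⟨Ideal.Quotient.mk I c, ⟨c, hc, rfl⟩, (Ideal.Quotient.eq.2 hac).symm⟩
  · rintro _ ⟨_, ⟨c, hc, rfl⟩, rfl⟩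
    refine ⟨⟨x * c, SetLike.mul_mem_graded hx hc, rfl⟩, ?_⟩
    have hxc : x * c ∈ I ⊔ Ideal.span {x} :=
      Ideal.mem_sup_right (Ideal.mul_mem_right _ _ (Ideal.mem_span_singleton_self x))
    exact Ideal.Quotient.eq_zero_iff_mem.2 hxc

end CommRing

variable {K A : Type*} [Field K] [CommRing A] [Algebra K A] {𝒜 : ℕ → Submodule K A}

theorem finrank_quotientGrading_add_finrank_inf_ker {I J : Ideal A} (hIJ : I ≤ J) (n : ℕ)
    [Module.Finite K (𝒜 n)] :
    Module.finrank K (quotientGrading 𝒜 J n) + Module.finrank K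
      (quotientGrading 𝒜 I n ⊓ LinearMap.ker (Ideal.Quotient.factorₐ K hIJ).toLinearMap :
        Submodule K (A ⧸ I)) = Module.finrank K (quotientGrading 𝒜 I n) := by
  have : Module.Finite K (quotientGrading 𝒜 I n) := Module.Finite.map _ _
  set π := (Ideal.Quotient.factorₐ K hIJ).toLinearMap
  rw [← LinearMap.finrank_range_add_finrank_ker (π.domRestrict (quotientGrading 𝒜 I n))]
  congr 1
  · rw [LinearMap.range_domRestrict, quotientGrading, quotientGrading, ← Submodule.map_comp]
    rfl
  · rw [LinearMap.ker_domRestrict, ← Submodule.map_comap_subtype]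
    exact Submodule.finrank_map_subtype_eq _ _

variable [GradedAlgebra 𝒜] [∀ n, Module.Finite K (𝒜 n)]

theorem hilbertSeries_quotientGrading_sup_span_singleton {I : Ideal A} (hI : I.IsHomogeneous 𝒜)
    {x : A} {k : ℕ} (hx : x ∈ 𝒜 k) (hreg : IsSMulRegular (A ⧸ I) x) :
    hilbertSeries (quotientGrading 𝒜 (I ⊔ Ideal.span {x})) =
      hilbertSeries (quotientGrading 𝒜 I) * (1 - X ^ k) := by
  ext n
  have rank_nullity := finrank_quotientGrading_add_finrank_inf_ker (𝒜 := 𝒜)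
    (le_sup_left : I ≤ I ⊔ Ideal.span {x}) n
  rw [mul_one_sub, map_sub, coeff_mul_X_pow']
  simp only [hilbertSeries, coeff_mk, ← rank_nullity]
  split_ifs with hkn
  · obtain ⟨n, rfl⟩ := Nat.exists_eq_add_of_le hkn
    have mul_injective : Function.Injective (LinearMap.mulLeft K (Ideal.Quotient.mk I x)) := hreg
    rw [quotientGrading_inf_ker_eq_map_mulLeft hI hx, Nat.add_sub_cancel_left,
      ← LinearEquiv.finrank_eq (Submodule.equivMapOfInjective _ mul_injective _),
      Nat.cast_add, add_sub_cancel_right]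
  · rw [quotientGrading_inf_ker_eq_bot_of_lt hI hx (not_le.1 hkn), finrank_bot, add_zero, sub_zero]

theorem hilbertSeries_quotientGrading_ofList {L : List A} (hL : ∀ x ∈ L, x ∈ 𝒜 1)
    (hreg : RingTheory.Sequence.IsWeaklyRegular A L) :
    hilbertSeries (quotientGrading 𝒜 (Ideal.ofList L)) =
      hilbertSeries 𝒜 * (1 - X) ^ L.length := by
  induction L using List.reverseRecOn with
  | nil =>
    rw [Ideal.ofList_nil, hilbertSeries_quotientGrading_bot, List.length_nil, pow_zero, mul_one]
  | append_singleton L x ih =>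
    simp only [List.mem_append, List.mem_singleton, or_imp, forall_and, forall_eq] at hL
    rw [RingTheory.Sequence.isWeaklyRegular_append_iff,
      RingTheory.Sequence.isWeaklyRegular_singleton_iff, smul_eq_mul, Ideal.mul_top] at hreg
    have hhom : (Ideal.ofList L).IsHomogeneous 𝒜 :=
      Ideal.homogeneous_span 𝒜 _ fun y hy => ⟨1, hL.1 y hy⟩
    rw [Ideal.ofList_append, Ideal.ofList_singleton,
      hilbertSeries_quotientGrading_sup_span_singleton hhom hL.2 hreg.2, ih hL.1 hreg.1,
      pow_one, List.length_append, List.length_singleton, pow_succ, mul_assoc]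

theorem isTopHeavy_hilbertSeries_mul_one_sub_X_pow {L : List A} (hL : ∀ x ∈ L, x ∈ 𝒜 1)
    (hreg : RingTheory.Sequence.IsWeaklyRegular A L) {r : ℕ} (hr : 0 < r) :
    IsTopHeavy ((r - 1) * L.length / r)
      ((hilbertSeries fun i => 𝒜 (i * r)) * (1 - X) ^ L.length) := by
  rw [← veroneseSeries_hilbertSeries]
  refine isTopHeavy_veroneseSeries_mul_one_sub_X_pow hr fun n => ?_
  rw [← hilbertSeries_quotientGrading_ofList hL hreg, hilbertSeries, coeff_mk]
  exact Int.natCast_nonneg _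

end HilbertSeries

section LinearParameters

theorem ringKrullDim_quotient_sup_span_singleton_le {R : Type*} [CommRing R] {I : Ideal R} {x : R}
    {n : ℕ} (hx : ∀ p ∈ I.minimalPrimes, x ∈ p → p.IsMaximal)
    (hI : ringKrullDim (R ⧸ I) ≤ (n + 1 : ℕ)) :
    ringKrullDim (R ⧸ (I ⊔ Ideal.span {x})) ≤ n := by
  simp only [ringKrullDim_quotient, ← ENat.WithBot.lt_add_one_iff] at hI ⊢
  norm_cast at hI ⊢
  rw [Order.krullDim_lt_coe_iff] at hI ⊢
  intro l
  -- A chain of primes over `I + (x)` extends downwards by a minimal prime of `I`, unless it starts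
  -- at such a prime, which is then maximal.
  have hl : I ⊔ Ideal.span {x} ≤ l.head.1.asIdeal := l.head.2
  have hIx : I ≤ l.head.1.asIdeal ∧ x ∈ l.head.1.asIdeal := by
    simpa only [sup_le_iff, Ideal.span_singleton_le_iff_mem] using hl
  obtain ⟨q, hq, hql⟩ := Ideal.exists_minimalPrimes_le hIx.1
  let q' : PrimeSpectrum.zeroLocus (R := R) I := ⟨⟨q, hq.isPrime⟩, hq.1.2⟩
  let l' : LTSeries (PrimeSpectrum.zeroLocus (R := R) I) :=
    l.map (fun p => ⟨p.1, (le_sup_left : I ≤ I ⊔ Ideal.span {x}).trans p.2⟩) fun _ _ h => h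
  rcases hql.lt_or_eq with hlt | rfl
  · exact Nat.lt_of_succ_lt_succ ((l'.cons_length q' hlt).symm.trans_lt (hI _))
  · have head_isMax : IsMax l.head := fun p hp =>
      ((hx _ hq hIx.2).eq_of_le p.1.isPrime.ne_top hp).ge
    have := Order.length_le_coheight_head (p := l)
    rw [Order.coheight_eq_zero.2 head_isMax] at this
    norm_cast at this
    omega

theorem isMaximal_of_adjoin_eq_top {K A : Type*} [Field K] [CommRing A] [Algebra K A] {s : Set A}
    (hs : Algebra.adjoin K s = ⊤) {p : Ideal A} (hp : p ≠ ⊤) (hsp : s ⊆ p) : p.IsMaximal := by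
  have := Ideal.Quotient.nontrivial_iff.2 hp
  have image_le : (Algebra.adjoin K s).map (Ideal.Quotient.mkₐ K p) ≤ ⊥ := by
    rw [AlgHom.map_adjoin, Algebra.adjoin_le_iff]
    rintro _ ⟨v, hv, rfl⟩
    simp [Ideal.Quotient.eq_zero_iff_mem.2 (hsp hv)]
  have hbot : (⊥ : Subalgebra K (A ⧸ p)) = ⊤ := by
    rw [hs, Algebra.map_top, (AlgHom.range_eq_top _).2 (Ideal.Quotient.mkₐ_surjective K p)]
      at image_le
    exact top_le_iff.1 image_le
  let e := RingEquiv.ofBijective _ (Algebra.bijective_algebraMap_iff.2 hbot.symm)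
  exact Ideal.Quotient.maximal_of_isField p (e.symm.toMulEquiv.isField (Field.toIsField K))

theorem exists_mem_forall_notMem_of_finite {K M : Type*} [Field K] [Infinite K] [AddCommGroup M]
    [Module K M] {V : Submodule K M} {S : Set (Submodule K M)} (hS : S.Finite)
    (hV : ∀ W ∈ S, ¬ V ≤ W) : ∃ v ∈ V, ∀ W ∈ S, v ∉ W := by
  by_contra! hcover
  have : Finite S := hS
  obtain ⟨W, hW⟩ := Subspace.exists_eq_top_of_iUnion_eq_univ
    (p := fun W : S => W.1.submoduleOf V) <| Set.eq_univ_of_forall fun v => by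
      obtain ⟨W, hWS, hvW⟩ := hcover v v.2
      exact Set.mem_iUnion.2 ⟨⟨W, hWS⟩, hvW⟩
  exact hV W W.2 (Submodule.submoduleOf_eq_top.1 hW)

theorem exists_mem_forall_minimalPrimes_isMaximal {K A : Type*} [Field K] [Infinite K] [CommRing A]
    [Algebra K A] [IsNoetherianRing A] {V : Submodule K A} (hV : Algebra.adjoin K (V : Set A) = ⊤)
    (I : Ideal A) : ∃ v ∈ V, ∀ p ∈ I.minimalPrimes, v ∈ p → p.IsMaximal := by
  obtain ⟨v, hvV, hv⟩ := exists_mem_forall_notMem_of_finite (V := V)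
    (S := Submodule.restrictScalars K '' {p : Ideal A | p ∈ I.minimalPrimes ∧ ¬ p.IsMaximal})
    ((I.finite_minimalPrimes_of_isNoetherianRing.subset (Set.sep_subset _ _)).image _) (by
      rintro _ ⟨p, ⟨hp, hpmax⟩, rfl⟩ hVp
      exact hpmax (isMaximal_of_adjoin_eq_top hV hp.isPrime.ne_top hVp))
  refine ⟨v, hvV, fun p hp hvp => ?_⟩
  by_contra hpmax
  exact hv _ ⟨p, ⟨hp, hpmax⟩, rfl⟩ hvp

theorem exists_finite_quotient_sup_span_range {K A : Type*} [Field K] [Infinite K] [CommRing A]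
    [Algebra K A] [Algebra.FiniteType K A] {V : Submodule K A}
    (hV : Algebra.adjoin K (V : Set A) = ⊤) {n : ℕ} {I : Ideal A}
    (hI : ringKrullDim (A ⧸ I) ≤ n) :
    ∃ θ : Fin n → A, (∀ j, θ j ∈ V) ∧
      Module.Finite K (A ⧸ (I ⊔ Ideal.span (Set.range θ))) := by
  have : IsNoetherianRing A := Algebra.FiniteType.isNoetherianRing K A
  induction n generalizing I with
  | zero =>
    refine ⟨Fin.elim0, fun j => j.elim0, ?_⟩
    rw [Set.range_eq_empty, Ideal.span_empty, sup_bot_eq, Module.finite_iff_krullDimLE_zero]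
    exact Ring.krullDimLE_iff.2 hI
  | succ n ih =>
    obtain ⟨v, hvV, hv⟩ := exists_mem_forall_minimalPrimes_isMaximal hV I
    obtain ⟨θ, hθV, hθ⟩ := ih (ringKrullDim_quotient_sup_span_singleton_le hv hI)
    refine ⟨Fin.cons v θ, Fin.cases hvV hθV, ?_⟩
    rwa [Fin.range_cons, Set.insert_eq, Ideal.span_union, ← sup_assoc]

end LinearParameters

section StandardGraded

theorem pow_le_toSubmodule_adjoin {K A : Type*} [CommSemiring K] [Semiring A] [Algebra K A]
    (V : Submodule K A) (i : ℕ) :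
    V ^ i ≤ Subalgebra.toSubmodule (Algebra.adjoin K (V : Set A)) := by
  induction i with
  | zero =>
    rw [pow_zero]
    exact Submodule.one_le.2 (Subalgebra.one_mem _)
  | succ i ih =>
    rw [pow_succ, Submodule.mul_le]
    exact fun a ha v hv => Subalgebra.mul_mem _ (ih ha) (Algebra.subset_adjoin hv)

theorem adjoin_eq_top_of_forall_le_pow {K A : Type*} [CommRing K] [CommRing A] [Algebra K A]
    {𝒜 : ℕ → Submodule K A} [GradedAlgebra 𝒜] {V : Submodule K A} (h : ∀ i, 𝒜 i ≤ V ^ i) :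
    Algebra.adjoin K (V : Set A) = ⊤ := by
  rw [← Algebra.toSubmodule_eq_top, eq_top_iff,
    ← (DirectSum.Decomposition.isInternal 𝒜).submodule_iSup_eq_top]
  exact iSup_le fun i => (h i).trans (pow_le_toSubmodule_adjoin V i)

variable {K A : Type*} [Field K] [CommRing A] [Algebra K A] {𝒜 : ℕ → Submodule K A}
  [GradedAlgebra 𝒜]

theorem exists_linear_systemOfParameters [Infinite K] (hstd : ∀ i, 𝒜 i = 𝒜 1 ^ i)
    [Module.Finite K (𝒜 1)] {d : ℕ} (hdim : ringKrullDim A ≤ d) :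
    ∃ θ : Fin d → A, (∀ j, θ j ∈ 𝒜 1) ∧ Module.Finite K (A ⧸ Ideal.span (Set.range θ)) := by
  have hadjoin : Algebra.adjoin K (𝒜 1 : Set A) = ⊤ :=
    adjoin_eq_top_of_forall_le_pow fun i => (hstd i).le
  obtain ⟨S, hS⟩ := Module.Finite.iff_fg.1 ‹Module.Finite K (𝒜 1)›
  have : Algebra.FiniteType K A := ⟨S, by rw [← Algebra.adjoin_span, hS, hadjoin]⟩
  have hdim_bot : ringKrullDim (A ⧸ (⊥ : Ideal A)) ≤ d := (ringKrullDim_quotient_le ⊥).trans hdim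
  obtain ⟨θ, hθ, hθfin⟩ := exists_finite_quotient_sup_span_range hadjoin hdim_bot
  exact ⟨θ, hθ, by rwa [bot_sup_eq] at hθfin⟩

theorem veronese_h_polynomial_coeff_le_general [Infinite K] (hstd : ∀ i, 𝒜 i = 𝒜 1 ^ i)
    (hfin : ∀ i, Module.Finite K (𝒜 i)) {d : ℕ} (hdim : ringKrullDim A = d)
    (hCM : ∀ θ : Fin d → A, (∀ j, θ j ∈ 𝒜 1) → Module.Finite K (A ⧸ Ideal.span (Set.range θ)) →
      RingTheory.Sequence.IsRegular A (List.ofFn θ))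
    {r : ℕ} (hr : 1 ≤ r) {h : Polynomial ℤ}
    (hh : (h : PowerSeries ℤ) =
      (hilbertSeries fun i => 𝒜 (i * r)) * (1 - PowerSeries.X) ^ d)
    {a b : ℕ} (hab : a ≤ b) (hsum : a + b ≤ (r - 1) * d / r) : h.coeff a ≤ h.coeff b := by
  obtain ⟨θ, hθ, hθfin⟩ := exists_linear_systemOfParameters hstd hdim.le
  have topHeavy := isTopHeavy_hilbertSeries_mul_one_sub_X_pow ((List.forall_mem_ofFn_iff).2 hθ)
    (hCM θ hθ hθfin).toIsWeaklyRegular hr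
  rw [List.length_ofFn, ← hh] at topHeavy
  simpa only [Polynomial.coeff_coe] using topHeavy.coeff_le hab hsum

end StandardGraded

/-- **Theorem 1.3(iii), Kubitzke–Murai.**
Let `K` be a field of characteristic `0` and `A` a Cohen-Macaulay standard graded `K`-algebra
of Krull dimension `d`, let `r ≥ 1`, set `s = ⌊(r-1)d/r⌋`, and let
`h_{A^⟨r⟩}(t) = ∑_i h_i^⟨r⟩ tⁱ` be the `h`-polynomial of the `r`-th Veronese subalgebra
`A^⟨r⟩ = ⊕_i A_{ir}` (whose Hilbert series is `∑_i dim_K A_{ir} tⁱ = h_{A^⟨r⟩}(t)/(1-t)^d`).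
Then `h_i^⟨r⟩ ≤ h_{s-i}^⟨r⟩` for all `i ≤ s/2`. -/
theorem veronese_h_polynomial_coeff_le
    (K : Type*) [Field K] [CharZero K]
    (A : Type*) [CommRing A] [Algebra K A]
    (𝒜 : ℕ → Submodule K A) [GradedAlgebra 𝒜]
    (hstd : ∀ i, 𝒜 i = 𝒜 1 ^ i)
    (hfin : ∀ i, Module.Finite K (𝒜 i))
    (d : ℕ) (hdim : ringKrullDim A = d)
    (hCM : ∀ θ' : Fin d → A, (∀ j, θ' j ∈ 𝒜 1) →
      Module.Finite K (A ⧸ Ideal.span (Set.range θ')) →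
      RingTheory.Sequence.IsRegular A (List.ofFn θ'))
    (r : ℕ) (hr : 1 ≤ r)
    (hrpoly : Polynomial ℤ)
    (hhr : (hrpoly : PowerSeries ℤ) =
      (PowerSeries.mk fun i => (Module.finrank K (𝒜 (i * r)) : ℤ)) * (1 - PowerSeries.X) ^ d) :
    ∀ i : ℕ, 2 * i ≤ (r - 1) * d / r →
      hrpoly.coeff i ≤ hrpoly.coeff ((r - 1) * d / r - i) := by
  exact fun i hi =>
    veronese_h_polynomial_coeff_le_general hstd hfin hdim hCM hr hhr (by omega) (by omega)
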